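/- arXiv:1701.08949 — 2 statements merged into one kernel-verified Lean document; each statement's English description precedes it below -/
import Mathlib

section
/- Let A be a nilpotent algebra in a variety with a weak difference term and fix 0 ∈ A. Then for any congruences θ₁,…,θₙ of A, the higher commutator [θ₁,…,θₙ] equals the congruence of A generated by the set of pairs {(0, f(b₁,…,bₙ)) : f ∈ Ab^n₀ A and (0,b_i) ∈ θ_i for each i}. -/
set_option autoImplicit false

namespace UA

/-- A signature: a type of operation symbols, each with a finite arity. -/
structure Signature : Type 1 where
  ops : Type
  arity : ops → ℕ

/-- An algebra for a signature: a carrier set together with an interpretation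
of every operation symbol. -/
structure Algebra (σ : Signature) : Type 1 where
  carrier : Type
  interp : (o : σ.ops) → (Fin (σ.arity o) → carrier) → carrier

variable {σ : Signature}

/-- A congruence of an algebra: an equivalence relation compatible with all
basic operations. -/
structure Con (A : Algebra σ) : Type where
  r : A.carrier → A.carrier → Prop
  refl : ∀ a, r a a
  symm : ∀ {a b}, r a b → r b a
  trans : ∀ {a b c}, r a b → r b c → r a c
  compat : ∀ (o : σ.ops) (x y : Fin (σ.arity o) → A.carrier),
      (∀ i, r (x i) (y i)) → r (A.interp o x) (A.interp o y)

namespace Con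

variable {A : Algebra σ}

instance : LE (Con A) := ⟨fun c d => ∀ a b : A.carrier, c.r a b → d.r a b⟩
instance : LT (Con A) := ⟨fun c d => c ≤ d ∧ ¬ d ≤ c⟩

/-- The total congruence `1_A`. -/
def top : Con A where
  r := fun _ _ => True
  refl := fun _ => trivial
  symm := fun _ => trivial
  trans := fun _ _ => trivial
  compat := fun _ _ _ _ => trivial

/-- The identity congruence `0_A`. -/
def bot : Con A where
  r := fun a b => a = b
  refl := fun _ => rfl
  symm := fun h => h.symm
  trans := fun h h' => h.trans h'
  compat := fun o _ _ h => congrArg (A.interp o) (funext h)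

/-- Meet of an arbitrary family of congruences (intersection). -/
def sInf (S : Set (Con A)) : Con A where
  r a b := ∀ c ∈ S, c.r a b
  refl a c _ := c.refl a
  symm h c hc := c.symm (h c hc)
  trans h h' c hc := c.trans (h c hc) (h' c hc)
  compat o x y h c hc := c.compat o x y (fun i => h i c hc)

/-- Binary meet of congruences. -/
def inf (c d : Con A) : Con A where
  r a b := c.r a b ∧ d.r a b
  refl a := ⟨c.refl a, d.refl a⟩
  symm h := ⟨c.symm h.1, d.symm h.2⟩
  trans h h' := ⟨c.trans h.1 h'.1, d.trans h.2 h'.2⟩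
  compat o x y h := ⟨c.compat o x y fun i => (h i).1, d.compat o x y fun i => (h i).2⟩

/-- The congruence generated by a set of pairs. -/
def conGen (S : Set (A.carrier × A.carrier)) : Con A :=
  sInf {c : Con A | ∀ p ∈ S, c.r p.1 p.2}

/-- Binary join of congruences. -/
def sup (c d : Con A) : Con A := conGen {p | c.r p.1 p.2 ∨ d.r p.1 p.2}

/-- Join of a family of congruences. -/
def iSup {I : Type} (f : I → Con A) : Con A := conGen {p | ∃ i, (f i).r p.1 p.2}

/-- Composition of congruences as binary relations. -/
def comp (c d : Con A) (a b : A.carrier) : Prop := ∃ x, c.r a x ∧ d.r x b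

/-- `d` covers `c` in the congruence lattice. -/
def Covers (c d : Con A) : Prop := c < d ∧ ∀ e : Con A, c < e → e ≤ d → e = d

theorem le_sup_right {c d : Con A} : d ≤ sup c d :=
  fun a b h e he => he (a, b) (Or.inr h)

def toSetoid (c : Con A) : Setoid A.carrier := ⟨c.r, ⟨c.refl, c.symm, c.trans⟩⟩

end Con

/-- The quotient algebra `A/γ`. -/
noncomputable def quotAlg (A : Algebra σ) (γ : Con A) : Algebra σ where
  carrier := Quotient γ.toSetoid
  interp o x := Quotient.mk γ.toSetoid (A.interp o (fun i => (x i).out))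

/-- The quotient congruence `α/γ` for `γ ≤ α`. -/
noncomputable def Con.quot {A : Algebra σ} (α γ : Con A) (h : γ ≤ α) : Con (quotAlg A γ) where
  r x y := Quotient.liftOn₂ x y (fun a b => α.r a b)
    (fun a b a' b' ha hb => propext
      ⟨fun hr => α.trans (α.symm (h _ _ ha)) (α.trans hr (h _ _ hb)),
       fun hr => α.trans (h _ _ ha) (α.trans hr (α.symm (h _ _ hb)))⟩)
  refl x := Quotient.inductionOn x fun a => α.refl a
  symm {x y} h' := Quotient.inductionOn₂ x y (fun _ _ hab => α.symm hab) h'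
  trans {x y z} h1 h2 :=
    Quotient.inductionOn₃ x y z (fun _ _ _ hab hbc => α.trans hab hbc) h1 h2
  compat o x y hxy := by
    show α.r (A.interp o fun i => (x i).out) (A.interp o fun i => (y i).out)
    refine α.compat o _ _ fun i => ?_
    have h1 := hxy i
    rw [← Quotient.out_eq (x i), ← Quotient.out_eq (y i)] at h1
    exact h1

/-- The polynomial operations of an algebra: the clone generated by the basic
operations, the projections and the constants. -/
inductive IsPolynomial (A : Algebra σ) : {n : ℕ} → ((Fin n → A.carrier) → A.carrier) → Prop
  | proj {n : ℕ} (i : Fin n) : IsPolynomial A (fun x => x i)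
  | const {n : ℕ} (a : A.carrier) : IsPolynomial A (fun _ : Fin n → A.carrier => a)
  | app {n : ℕ} (o : σ.ops) (g : Fin (σ.arity o) → (Fin n → A.carrier) → A.carrier) :
      (∀ j, IsPolynomial A (g j)) → IsPolynomial A (fun x => A.interp o (fun j => g j x))

/-- Substituting, coordinatewise according to the grouping `g` and the choice
vector `ε`, the entries of `b` (where `ε` is `true`) or of `a` (where `ε` is `false`). -/
def chooseVec {β : Type} {N n : ℕ} (g : Fin N → Fin n) (a b : Fin N → β)
    (ε : Fin n → Bool) : Fin N → β :=
  fun i => if ε (g i) then b i else a i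

/-- The higher centralizer relation `C(α₁,…,αₙ,β;δ)` of Bulatov.  Polynomials with
grouped variables are modelled by a polynomial `p` of arity `N` together with a
grouping map `g : Fin N → Fin (n+1)`; the group `Fin.last n` is the `β`-group. -/
def Centralizes {A : Algebra σ} {n : ℕ} (α : Fin n → Con A) (β δ : Con A) : Prop :=
  ∀ (N : ℕ) (p : (Fin N → A.carrier) → A.carrier), IsPolynomial A p →
    ∀ (g : Fin N → Fin (n + 1)) (a b : Fin N → A.carrier),
      (∀ i, (Fin.lastCases (motive := fun _ => Con A) β α (g i)).r (a i) (b i)) →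
      (∀ ε : Fin n → Bool, ε ≠ (fun _ => true) →
        δ.r (p (chooseVec g a b (Fin.lastCases (motive := fun _ => Bool) false ε)))
            (p (chooseVec g a b (Fin.lastCases (motive := fun _ => Bool) true ε)))) →
      δ.r (p (chooseVec g a b (Fin.lastCases (motive := fun _ => Bool) false fun _ => true)))
          (p (chooseVec g a b (Fin.lastCases (motive := fun _ => Bool) true fun _ => true)))

/-- The higher commutator `[α₁,…,αₙ,β]`: the smallest congruence `δ` such that
`C(α₁,…,αₙ,β;δ)` holds. -/
def commutator {A : Algebra σ} {n : ℕ} (α : Fin n → Con A) (β : Con A) : Con A :=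
  Con.sInf {δ : Con A | Centralizes α β δ}

/-- The higher commutator of a nonempty list of congruences, with the convention
`[α] = α` for a single congruence. -/
def commList {A : Algebra σ} : {n : ℕ} → (Fin (n + 1) → Con A) → Con A
  | 0, γ => γ 0
  | (n+1), γ => commutator (fun j : Fin (n+1) => γ j.castSucc) (γ (Fin.last (n+1)))

/-- The `m`-fold commutator `[θ,…,θ]_m` (for `m ≥ 1`). -/
def nfold {A : Algebra σ} (θ : Con A) (m : ℕ) : Con A :=
  commList (fun _ : Fin (m - 1 + 1) => θ)

/-- The binary commutator `[c,d]`. -/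
def binComm {A : Algebra σ} (c d : Con A) : Con A := commutator (fun _ : Fin 1 => c) d

/-- The lower central series `(θ]ⁿ`. -/
def lcs {A : Algebra σ} (θ : Con A) : ℕ → Con A
  | 0 => θ
  | (k+1) => binComm θ (lcs θ k)

/-- The derived series `[θ]ⁿ`. -/
def derived {A : Algebra σ} (θ : Con A) : ℕ → Con A
  | 0 => θ
  | (k+1) => binComm (derived θ k) (derived θ k)

/-- An algebra is nilpotent if some term of the lower central series of `1_A` is `0_A`. -/
def Nilpotent (A : Algebra σ) : Prop := ∃ m, lcs (Con.top : Con A) m = Con.bot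

/-- An algebra is nilpotent of class `n` if `(1_A]ⁿ = 0_A`. -/
def NilpotentOfClass (A : Algebra σ) (n : ℕ) : Prop := lcs (Con.top : Con A) n = Con.bot

/-- A congruence is solvable if some term of its derived series is `0_A`. -/
def SolvableCon {A : Algebra σ} (θ : Con A) : Prop := ∃ m, derived θ m = Con.bot

/-- `A` is `n`-supernilpotent if `[1_A,…,1_A]_n = 0_A`. -/
def Supernilpotent (A : Algebra σ) (n : ℕ) : Prop := nfold (Con.top : Con A) n = Con.bot

/-- A polynomial `f` absorbs the tuple `a` to the element `c`. -/
def Absorbs (A : Algebra σ) {k : ℕ} (f : (Fin k → A.carrier) → A.carrier)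
    (a : Fin k → A.carrier) (c : A.carrier) : Prop :=
  ∀ b : Fin k → A.carrier, (∃ i, b i = a i) → f b = c

/-- Terms over a signature with variables in `X`. -/
inductive Term (σ : Signature) (X : Type) : Type
  | var : X → Term σ X
  | app : (o : σ.ops) → (Fin (σ.arity o) → Term σ X) → Term σ X

/-- Evaluation of a term in an algebra under an assignment of the variables. -/
def Term.eval {X : Type} (A : Algebra σ) (v : X → A.carrier) : Term σ X → A.carrier
  | Term.var x => v x
  | Term.app o t => A.interp o fun i => Term.eval A v (t i)

/-- Substitution of terms into a term. -/
def Term.subst {X Y : Type} : Term σ X → (X → Term σ Y) → Term σ Y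
  | Term.var x, s => s x
  | Term.app o t, s => Term.app o fun i => Term.subst (t i) s

/-- `A` possesses a Mal'cev term. -/
def HasMalcevTerm (A : Algebra σ) : Prop :=
  ∃ t : Term σ (Fin 3), ∀ a b : A.carrier,
    t.eval A ![a, b, b] = a ∧ t.eval A ![b, b, a] = a

/-- A class of algebras is a variety when it is the class of all models of a set
of identities. -/
def IsVariety (V : Algebra σ → Prop) : Prop :=
  ∃ E : Set (Term σ ℕ × Term σ ℕ),
    ∀ A : Algebra σ, V A ↔ ∀ e ∈ E, ∀ v : ℕ → A.carrier, e.1.eval A v = e.2.eval A v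

/-- Two terms are `V`-equivalent when they evaluate equally in every member of `V`. -/
def vSetoid (V : Algebra σ → Prop) (X : Type) : Setoid (Term σ X) where
  r t s := ∀ A : Algebra σ, V A → ∀ v : X → A.carrier, t.eval A v = s.eval A v
  iseqv := ⟨fun _ _ _ _ => rfl, fun h A hA v => (h A hA v).symm,
    fun h h' A hA v => (h A hA v).trans (h' A hA v)⟩

/-- The `V`-free algebra on the set `X` of generators. -/
noncomputable def freeAlg (V : Algebra σ → Prop) (X : Type) : Algebra σ where
  carrier := Quotient (vSetoid V X)
  interp o x := Quotient.mk (vSetoid V X) (Term.app o fun i => (x i).out)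

/-- The principal congruence `θ(a,b)` generated by the pair `(a,b)`. -/
def conPair (A : Algebra σ) (a b : A.carrier) : Con A := Con.conGen {(a, b)}

/-- A weak difference term for the class `V`. -/
def IsWeakDiffTerm (V : Algebra σ → Prop) (c : Term σ (Fin 3)) : Prop :=
  ∀ A : Algebra σ, V A → ∀ a b : A.carrier,
    (binComm (conPair A a b) (conPair A a b)).r (c.eval A ![a, b, b]) a ∧
    (binComm (conPair A a b) (conPair A a b)).r a (c.eval A ![b, b, a])

/-- A weak `n`-difference term for the class `V`. -/
def IsWeakNDiffTerm (V : Algebra σ → Prop) (n : ℕ) (c : Term σ (Fin 3)) : Prop :=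
  ∀ A : Algebra σ, V A → ∀ a b : A.carrier,
    (nfold (conPair A a b) n).r (c.eval A ![a, b, b]) a ∧
    (nfold (conPair A a b) n).r a (c.eval A ![b, b, a])

/-- Order-preserving maps on the congruence lattice. -/
def MonotoneCon {A : Algebra σ} (F : Con A → Con A) : Prop :=
  ∀ c d : Con A, c ≤ d → F c ≤ F d

/-- `p` is a weak `f`-term of `A` with respect to the interpretation `F`. -/
def IsWeakFTerm (A : Algebra σ) (F : Con A → Con A) (p : Term σ (Fin 3)) : Prop :=
  ∀ (θ : Con A) (a b : A.carrier), θ.r a b →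
    (F θ).r (p.eval A ![a, b, b]) a ∧ (F θ).r a (p.eval A ![b, b, a])

/-- `p` is a weak `f`-term for the class `V`. -/
def HasWeakFTermVariety (V : Algebra σ → Prop) (p : Term σ (Fin 3)) : Prop :=
  ∀ A : Algebra σ, V A → ∃ F : Con A → Con A, MonotoneCon F ∧ IsWeakFTerm A F p

/-- The set `T^θ_{n,f}(θ₁,…,θₙ)` of pairs coming from polynomials which
`f(θ)`-absorb on the cube `{ā₁,b̄₁}×⋯×{āₙ,b̄ₙ}`. -/
def TSet (A : Algebra σ) (F : Con A → Con A) (θ : Con A) {n : ℕ} (θs : Fin n → Con A) :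
    Set (A.carrier × A.carrier) :=
  {pr | ∃ (N : ℕ) (g : (Fin N → A.carrier) → A.carrier), IsPolynomial A g ∧
    ∃ (gr : Fin N → Fin n) (a b : Fin N → A.carrier),
      (∀ i, (θs (gr i)).r (a i) (b i)) ∧
      (∀ ε : Fin n → Bool, (∃ j, ε j = false) →
        (F θ).r (g (fun i => if ε (gr i) then b i else a i)) (g a)) ∧
      pr = (g b, g a)}

/-- Homomorphisms of algebras. -/
def IsHom (A B : Algebra σ) (h : A.carrier → B.carrier) : Prop :=
  ∀ (o : σ.ops) (x : Fin (σ.arity o) → A.carrier),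
    h (A.interp o x) = B.interp o (fun i => h (x i))

/-- The product of a family of algebras. -/
def prodAlg {I : Type} (As : I → Algebra σ) : Algebra σ where
  carrier := ∀ i, (As i).carrier
  interp o x i := (As i).interp o (fun j => x j i)

/-- The subuniverse generated by a subset. -/
inductive Gen (A : Algebra σ) (S : Set A.carrier) : A.carrier → Prop
  | base {a : A.carrier} : a ∈ S → Gen A S a
  | app (o : σ.ops) (x : Fin (σ.arity o) → A.carrier) :
      (∀ i, Gen A S (x i)) → Gen A S (A.interp o x)

/-- `A` possesses a Taylor term. -/
def HasTaylorTerm (A : Algebra σ) : Prop :=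
  ∃ (n : ℕ) (t : Term σ (Fin n)), 1 ≤ n ∧
    (∀ a : A.carrier, t.eval A (fun _ => a) = a) ∧
    ∀ i : Fin n, ∃ u v : Fin n → Bool, u i = true ∧ v i = false ∧
      ∀ x y : A.carrier,
        t.eval A (fun j => if u j then x else y) = t.eval A (fun j => if v j then x else y)

/-- The variety `V` possesses a Taylor term. -/
def VarietyHasTaylorTerm (V : Algebra σ → Prop) : Prop :=
  ∃ (n : ℕ) (t : Term σ (Fin n)), 1 ≤ n ∧
    (∀ A : Algebra σ, V A → ∀ a : A.carrier, t.eval A (fun _ => a) = a) ∧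
    ∀ i : Fin n, ∃ u v : Fin n → Bool, u i = true ∧ v i = false ∧
      ∀ A : Algebra σ, V A → ∀ x y : A.carrier,
        t.eval A (fun j => if u j then x else y) = t.eval A (fun j => if v j then x else y)

/-- `Ξ(θ)`: the smallest set of congruences containing `θ` and closed under
higher commutators (of arity at least 2) of its members. -/
inductive Xi {A : Algebra σ} (θ : Con A) : Con A → Prop
  | base : Xi θ θ
  | comm {k : ℕ} (γ : Fin (k + 2) → Con A) : (∀ j, Xi θ (γ j)) → Xi θ (commList γ)

/-- An expanded loop on the carrier `α` with extra operations indexed by `ι`. -/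
structure ExpLoop (ι : Type) (ar : ι → ℕ) (α : Type) : Type where
  mul : α → α → α
  ldiv : α → α → α
  rdiv : α → α → α
  zero : α
  extra : (i : ι) → (Fin (ar i) → α) → α
  ldiv_mul : ∀ x y, ldiv x (mul x y) = y
  mul_rdiv : ∀ x y, rdiv (mul x y) y = x
  mul_ldiv : ∀ x y, mul x (ldiv x y) = y
  rdiv_mul : ∀ x y, mul (rdiv x y) y = x
  zero_mul : ∀ x, mul zero x = x
  mul_zero : ∀ x, mul x zero = x

/-- Operation symbols of an expanded loop. -/
inductive LoopOp (ι : Type) : Type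
  | mul | ldiv | rdiv | zero
  | extra : ι → LoopOp ι

/-- The signature of an expanded loop. -/
@[reducible] def loopSig (ι : Type) (ar : ι → ℕ) : Signature where
  ops := LoopOp ι
  arity o := match o with
    | .mul => 2
    | .ldiv => 2
    | .rdiv => 2
    | .zero => 0
    | .extra i => ar i

/-- The algebra underlying an expanded loop. -/
def ExpLoop.toAlgebra {ι : Type} {ar : ι → ℕ} {α : Type} (L : ExpLoop ι ar α) :
    Algebra (loopSig ι ar) where
  carrier := α
  interp o := match o with
    | .mul => fun x => L.mul (x 0) (x 1)
    | .ldiv => fun x => L.ldiv (x 0) (x 1)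
    | .rdiv => fun x => L.rdiv (x 0) (x 1)
    | .zero => fun _ => L.zero
    | .extra i => L.extra i

/-- An expanded loop is of `n`-type. -/
def ExpLoop.IsNType {ι : Type} {ar : ι → ℕ} {α : Type} (L : ExpLoop ι ar α) (n : ℕ) : Prop :=
  (∀ p : Σ k : ℕ, (Fin k → α) → α,
      (∃ i : ι, p = ⟨ar i, L.extra i⟩) ↔
        (1 ≤ p.1 ∧ p.1 ≤ n - 1 ∧ IsPolynomial L.toAlgebra p.2 ∧
          Absorbs L.toAlgebra p.2 (fun _ => L.zero) L.zero)) ∧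
  (∀ f : (Fin (n - 1) → α) → α,
      IsPolynomial L.toAlgebra f → Absorbs L.toAlgebra f (fun _ => L.zero) L.zero →
      ∀ (j : Fin (n - 1)) (x : Fin (n - 1) → α) (u v : α),
        f (Function.update x j (L.mul u v)) =
          L.mul (f (Function.update x j u)) (f (Function.update x j v))) ∧
  (∀ k : ℕ, 2 ≤ k → k < n →
      commList (Fin.snoc (fun _ : Fin (n - k) => (Con.top : Con L.toAlgebra))
        (nfold Con.top k)) = Con.bot)

/-- `A` is polynomially equivalent to an `n`-type expanded loop on the same carrier. -/
def PolyEquivNTypeLoop (A : Algebra σ) (n : ℕ) : Prop :=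
  ∃ (ι : Type) (ar : ι → ℕ) (L : ExpLoop ι ar A.carrier),
    L.IsNType n ∧
    ∀ (k : ℕ) (f : (Fin k → A.carrier) → A.carrier),
      IsPolynomial A f ↔ IsPolynomial L.toAlgebra f

/-- Left-associated product of a list with initial value `c`. -/
def lprodFrom {β : Type} (mul : β → β → β) (c : β) (l : List β) : β := List.foldl mul c l

/-- Left-associated product of a list (with a default value for the empty list). -/
def lprodList {β : Type} (mul : β → β → β) (dflt : β) : List β → β
  | [] => dflt
  | a :: l => List.foldl mul a l

/-- Left-associated product of a nonempty tuple. -/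
def lassoc {β : Type} (mul : β → β → β) : {m : ℕ} → (Fin (m + 1) → β) → β
  | 0, y => y 0
  | (m+1), y => mul (lassoc mul (Fin.init y)) (y (Fin.last (m+1)))

/-- `A` has a representation of degree `n`. -/
def HasRepOfDegree (A : Algebra σ) (n : ℕ) : Prop :=
  ∃ (z : A.carrier) (r : (Fin 2 → A.carrier) → A.carrier),
    IsPolynomial A r ∧ (∀ x : A.carrier, r ![z, x] = x) ∧ (∀ x : A.carrier, r ![x, z] = x) ∧
    ∀ (k : ℕ) (f : (Fin k → A.carrier) → A.carrier), IsPolynomial A f →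
      ∃ (c : A.carrier) (R : ℕ → (Fin k → A.carrier) → A.carrier),
        (∀ m : ℕ, 1 ≤ m → m ≤ min k n →
          ∃ (l : List (Finset (Fin k)))
            (t : (S : Finset (Fin k)) → (Fin S.card → A.carrier) → A.carrier),
            l.Nodup ∧
            (∀ S : Finset (Fin k), S ∈ l ↔ S.card = m) ∧
            (∀ S ∈ l, IsPolynomial A (t S) ∧ Absorbs A (t S) (fun _ => z) z) ∧
            (∀ x : Fin k → A.carrier,
              R m x = lprodList (fun u v => r ![u, v]) z
                (l.map (fun S => t S (fun j => x ((S.orderIsoOfFin rfl j).val)))))) ∧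
        ∀ x : Fin k → A.carrier,
          f x = lprodFrom (fun u v => r ![u, v]) c
            ((List.range' 1 (min k n)).map (fun m => R m x))

/-- Products of `0`-absorbing polynomials (of arities between `lo` and `hi`)
in a given set of variables. -/
inductive ProdOfAbs {ι : Type} {ar : ι → ℕ} {α : Type} (L : ExpLoop ι ar α)
    (lo hi : ℕ) {I : Type} : ((I → α) → α) → Prop
  | base {p : ℕ} (h : (Fin p → α) → α) (sel : Fin p → I) :
      lo ≤ p → p ≤ hi → IsPolynomial L.toAlgebra h →
      Absorbs L.toAlgebra h (fun _ => L.zero) L.zero →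
      ProdOfAbs L lo hi (fun v => h (fun j => v (sel j)))
  | mul {F G : (I → α) → α} :
      ProdOfAbs L lo hi F → ProdOfAbs L lo hi G →
      ProdOfAbs L lo hi (fun v => L.mul (F v) (G v))

/-- The terms `q_m` (for `m ≥ 2`, `qSeq q (m-2)` is `q_m`):
`q₂ := q`, `q_{m+1}(x,y,z) := q(x, q_m(x,y,y), q_m(x,y,z))`. -/
def qSeq (q : Term σ (Fin 3)) : ℕ → Term σ (Fin 3)
  | 0 => q
  | (k+1) => q.subst ![Term.var 0, (qSeq q k).subst ![Term.var 0, Term.var 1, Term.var 1], qSeq q k]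


/-! ### Helper lemmas -/

theorem Con.ext' {A : Algebra σ} {c d : Con A} (h1 : c ≤ d) (h2 : d ≤ c) : c = d := by
  have h : c.r = d.r := by
    funext a b
    exact propext ⟨h1 a b, h2 a b⟩
  cases c
  cases d
  cases h
  rfl

theorem IsPolynomial.comp {A : Algebra σ} {N : ℕ} {p : (Fin N → A.carrier) → A.carrier}
    (hp : IsPolynomial A p) {M : ℕ} (s : Fin N → (Fin M → A.carrier) → A.carrier)
    (hs : ∀ i, IsPolynomial A (s i)) : IsPolynomial A (fun y => p (fun i => s i y)) := by
  induction hp with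
  | proj i => exact hs i
  | const a => exact IsPolynomial.const a
  | app o g _ ih => exact IsPolynomial.app o (fun j y => g j (fun i => s i y)) ih

theorem IsPolynomial.con {A : Algebra σ} {N : ℕ} {p : (Fin N → A.carrier) → A.carrier}
    (hp : IsPolynomial A p) (δ : Con A) {x y : Fin N → A.carrier}
    (h : ∀ i, δ.r (x i) (y i)) : δ.r (p x) (p y) := by
  induction hp with
  | proj i => exact h i
  | const a => exact δ.refl a
  | app o g _ ih => exact δ.compat o _ _ ih

theorem Term.isPolynomial (A : Algebra σ) {N : ℕ} (t : Term σ (Fin N)) :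
    IsPolynomial A (fun x : Fin N → A.carrier => t.eval A x) := by
  induction t with
  | var x => exact IsPolynomial.proj x
  | app o t ih => exact IsPolynomial.app o (fun j x => (t j).eval A x) ih

/-- Ternary polynomials in curried form. -/
def Pol3 (A : Algebra σ) (d : A.carrier → A.carrier → A.carrier → A.carrier) : Prop :=
  IsPolynomial A (fun x : Fin 3 → A.carrier => d (x 0) (x 1) (x 2))

theorem Pol3.comp {A : Algebra σ} {d : A.carrier → A.carrier → A.carrier → A.carrier}
    (hd : Pol3 A d) {N : ℕ} {f g h : (Fin N → A.carrier) → A.carrier}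
    (hf : IsPolynomial A f) (hg : IsPolynomial A g) (hh : IsPolynomial A h) :
    IsPolynomial A (fun y => d (f y) (g y) (h y)) := by
  have := IsPolynomial.comp hd ![f, g, h] (by
    intro i
    fin_cases i
    · exact hf
    · exact hg
    · exact hh)
  exact this

theorem Pol3.con {A : Algebra σ} {d : A.carrier → A.carrier → A.carrier → A.carrier}
    (hd : Pol3 A d) (δ : Con A) {x y x' y' x'' y'' : A.carrier}
    (h : δ.r x y) (h' : δ.r x' y') (h'' : δ.r x'' y'') : δ.r (d x x' x'') (d y y' y'') := by
  have := IsPolynomial.con hd δ (x := ![x, x', x'']) (y := ![y, y', y'']) (by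
    intro i
    fin_cases i
    · exact h
    · exact h'
    · exact h'')
  exact this

theorem commutator_centralizes {A : Algebra σ} {n : ℕ} (α : Fin n → Con A) (β : Con A) :
    Centralizes α β (commutator α β) := by
  intro N p hp g a b hab h δ hδ
  exact hδ N p hp g a b hab (fun ε hε => h ε hε δ hδ)

theorem commutator_mono {A : Algebra σ} {n : ℕ} {α α' : Fin n → Con A} {β β' : Con A}
    (hα : ∀ i, α i ≤ α' i) (hβ : β ≤ β') : commutator α β ≤ commutator α' β' := by
  intro a b h δ hδ
  refine h δ ?_
  intro N p hp g x y hxy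
  refine hδ N p hp g x y ?_
  intro i
  have := hxy i
  revert this
  refine Fin.lastCases ?_ ?_ (g i)
  · simpa using hβ _ _
  · intro j
    simpa using hα j _ _

theorem term_condition {A : Algebra σ} {α β δ : Con A}
    (h : Centralizes (fun _ : Fin 1 => α) β δ) {p : (Fin 4 → A.carrier) → A.carrier}
    (hp : IsPolynomial A p) {x0 x1 x2 y0 y1 y2 s t : A.carrier}
    (h0 : β.r x0 y0) (h1 : β.r x1 y1) (h2 : β.r x2 y2) (hst : α.r s t)
    (hs : δ.r (p ![x0, x1, x2, s]) (p ![y0, y1, y2, s])) :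
    δ.r (p ![x0, x1, x2, t]) (p ![y0, y1, y2, t]) := by
  have key : ∀ e1 e2 : Bool,
      chooseVec (![1, 1, 1, 0] : Fin 4 → Fin 2) ![x0, x1, x2, s] ![y0, y1, y2, t]
        (Fin.lastCases (motive := fun _ => Bool) e1 (fun _ : Fin 1 => e2)) =
      ![if e1 then y0 else x0, if e1 then y1 else x1, if e1 then y2 else x2,
        if e2 then t else s] := by
    intro e1 e2
    funext i
    have l1 : (Fin.lastCases (motive := fun _ => Bool) e1 (fun _ : Fin 1 => e2) (1 : Fin 2))
      = e1 := rfl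
    have l0 : (Fin.lastCases (motive := fun _ => Bool) e1 (fun _ : Fin 1 => e2) (0 : Fin 2))
      = e2 := rfl
    fin_cases i <;> simp [chooseVec, l1, l0]
  have := h 4 p hp ![1, 1, 1, 0] ![x0, x1, x2, s] ![y0, y1, y2, t] (by
    intro i
    fin_cases i
    · exact h0
    · exact h1
    · exact h2
    · exact hst) (by
    intro ε hε
    have hf : ε = fun _ => false := by
      funext i
      by_contra hi
      apply hε
      funext j
      rw [Subsingleton.elim j i]
      simpa using hi
    subst hf
    rw [key, key]
    simpa using hs)
  rw [key, key] at this
  simpa using this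

theorem exists_malcev {σ : Signature} (V : Algebra σ → Prop)
    (c : Term σ (Fin 3)) (hc : IsWeakDiffTerm V c)
    (A : Algebra σ) (hA : V A) (hnil : Nilpotent A) :
    ∃ q r : A.carrier → A.carrier → A.carrier → A.carrier, Pol3 A q ∧ Pol3 A r ∧
      (∀ x y, q x y y = x) ∧ (∀ x y, q y y x = x) ∧ ∀ x a z, r (q x a z) a z = x := by
  obtain ⟨M, hM⟩ := hnil
  have hbot : ∀ a b, (lcs (Con.top : Con A) M).r a b → a = b := by
    intro a b h
    rw [hM] at h
    exact h
  have hcent : ∀ k, Centralizes (fun _ : Fin 1 => (Con.top : Con A)) (lcs Con.top k)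
      (lcs Con.top (k + 1)) := fun k => commutator_centralizes _ _
  have htop : ∀ a b, (lcs (Con.top : Con A) 0).r a b := fun _ _ => trivial
  generalize hζ : lcs (Con.top : Con A) = ζ at *
  -- the weak difference polynomial
  obtain ⟨d, hd, hd1, hd2⟩ : ∃ d, Pol3 A d ∧
      (∀ k a b, (ζ k).r a b → (ζ (k + 1)).r (d a b b) a) ∧
      (∀ k a b, (ζ k).r a b → (ζ (k + 1)).r (d a a b) b) := by
    have hle : ∀ k a b, (ζ k).r a b →
        binComm (conPair A a b) (conPair A a b) ≤ ζ (k + 1) := by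
      intro k a b hab
      subst hζ
      refine commutator_mono (fun _ _ _ _ => trivial) ?_
      intro x y hxy
      refine hxy _ ?_
      rintro p rfl
      exact hab
    refine ⟨fun x y w => c.eval A ![x, y, w], ?_, ?_, ?_⟩
    · have := Term.isPolynomial A c
      unfold Pol3
      convert this using 3 with x
      funext i
      fin_cases i <;> rfl
    · intro k a b hab
      exact hle k a b hab _ _ (hc A hA a b).1
    · intro k a b hab
      exact (ζ (k + 1)).symm (hle k b a ((ζ k).symm hab) _ _ (hc A hA b a).2)
  have hidem : ∀ a, d a a a = a := by
    intro a
    apply hbot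
    cases M with
    | zero => exact htop _ _
    | succ k => exact hd1 k a a ((ζ k).refl a)
  -- first side
  have step1 : ∀ k, ∃ e, Pol3 A e ∧ (∀ a, e a a a = a) ∧ (∀ x y, (ζ k).r (e x y y) x) ∧
      (∀ j a b, (ζ j).r a b → (ζ (j + 1)).r (e a a b) b) := by
    intro k
    induction k with
    | zero => exact ⟨d, hd, hidem, fun _ _ => htop _ _, hd2⟩
    | succ k ih =>
      obtain ⟨e, he, hei, he1, he2⟩ := ih
      refine ⟨fun x y w => d x (e x y y) (e x y w), ?_, ?_, ?_, ?_⟩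
      · exact hd.comp (.proj 0) (he.comp (.proj 0) (.proj 1) (.proj 1)) he
      · intro a
        simp only [hei, hidem]
      · intro x y
        exact hd1 k _ _ ((ζ k).symm (he1 x y))
      · intro j a b hab
        show (ζ (j + 1)).r (d a (e a a a) (e a a b)) b
        rw [hei]
        exact (ζ (j + 1)).trans
          (hd.con _ ((ζ (j + 1)).refl a) ((ζ (j + 1)).refl a) (he2 j a b hab)) (hd2 j a b hab)
  obtain ⟨e, he, hei, he1, he2⟩ := step1 M
  replace he1 : ∀ x y, e x y y = x := fun x y => hbot _ _ (he1 x y)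
  have step2 : ∀ k, ∃ q, Pol3 A q ∧ (∀ x y, q x y y = x) ∧ (∀ x y, (ζ k).r (q y y x) x) := by
    intro k
    induction k with
    | zero => exact ⟨e, he, he1, fun _ _ => htop _ _⟩
    | succ k ih =>
      obtain ⟨q, hq, hq1, hq2⟩ := ih
      refine ⟨fun x y w => e (q x y w) (q y y w) w, ?_, ?_, ?_⟩
      · exact he.comp hq (hq.comp (.proj 1) (.proj 1) (.proj 2)) (.proj 2)
      · intro x y
        simp only [hq1, he1]
      · intro x y
        exact he2 k _ _ (hq2 x y)
  obtain ⟨q, hq, hq1, hq2⟩ := step2 M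
  replace hq2 : ∀ x y, q y y x = x := fun x y => hbot _ _ (hq2 x y)
  have step3 : ∀ k, ∃ r, Pol3 A r ∧ ∀ x a w, (ζ k).r (r (q x a w) a w) x := by
    intro k
    induction k with
    | zero => exact ⟨fun u _ _ => u, .proj 0, fun _ _ _ => htop _ _⟩
    | succ k ih =>
      obtain ⟨r, hr, hr1⟩ := ih
      refine ⟨fun u a w => q u (q (r u a w) a w) (r u a w), ?_, ?_⟩
      · exact hq.comp (.proj 0) (hq.comp hr (.proj 1) (.proj 2)) hr
      · intro x a w
        have hp : IsPolynomial A (fun y : Fin 4 → A.carrier =>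
            q (q (y 0) (y 3) w) (q (y 1) (y 3) w) (y 2)) :=
          hq.comp (hq.comp (.proj 0) (.proj 3) (.const w))
            (hq.comp (.proj 1) (.proj 3) (.const w)) (.proj 2)
        have := term_condition (hcent k) hp (x0 := x) (y0 := x) (x1 := r (q x a w) a w) (y1 := x)
          (x2 := r (q x a w) a w) (y2 := x) (s := w) (t := a) ((ζ k).refl _) (hr1 x a w)
          (hr1 x a w) trivial (by
            simp only [Matrix.cons_val, hq1]
            exact (ζ (k + 1)).refl x)
        simp only [Matrix.cons_val, hq2] at this
        exact this
  obtain ⟨r, hr, hr1⟩ := step3 M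
  exact ⟨q, r, hq, hr, hq1, hq2, fun x a w => hbot _ _ (hr1 x a w)⟩

/-- The generating set of pairs from absorbing polynomials. -/
def absPairs {A : Algebra σ} (z : A.carrier) {m : ℕ} (θs : Fin m → Con A) :
    Set (A.carrier × A.carrier) :=
  {pr : A.carrier × A.carrier |
      ∃ (f : (Fin m → A.carrier) → A.carrier) (b : Fin m → A.carrier),
        IsPolynomial A f ∧ Absorbs A f (fun _ => z) z ∧
        (∀ i, (θs i).r z (b i)) ∧ pr = (z, f b)}

/-- Polynomials absorbing on blocks of variables only take values congruent to `z`. -/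
theorem block_absorbing {A : Algebra σ} {z : A.carrier} {m : ℕ} {θs : Fin m → Con A} {δ : Con A}
    (hδ : ∀ p ∈ absPairs z θs, δ.r p.1 p.2)
    {q r : A.carrier → A.carrier → A.carrier → A.carrier} (hq : Pol3 A q) (hr : Pol3 A r)
    (hq2 : ∀ x y, q y y x = x) (hrq : ∀ x a z, r (q x a z) a z = x)
    {N : ℕ} (b : Fin N → A.carrier) :
    ∀ (K : ℕ) (g : Fin N → Option (Fin m)) (P : (Fin N → A.carrier) → A.carrier),
      (Finset.univ.filter (fun i => g i ≠ none)).card ≤ K → IsPolynomial A P →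
      (∀ i j, g i = some j → (θs j).r z (b i)) →
      (∀ j y, (∀ i, g i = some j → y i = z) → P y = z) → δ.r z (P b) := by
  classical
  intro K
  induction K with
  | zero =>
    intro g P hK hP hb habs
    by_cases hm : ∃ j : Fin m, True
    · obtain ⟨j, -⟩ := hm
      rw [habs j b]
      · exact δ.refl z
      · intro i hi
        exfalso
        have : i ∈ Finset.univ.filter (fun i => g i ≠ none) := by simp [hi]
        rw [Finset.card_eq_zero.mp (Nat.le_zero.mp hK)] at this
        simp at this
    · exact hδ _ ⟨fun _ => P b, fun _ => z, .const _, fun y hy => absurd ⟨hy.choose, trivial⟩ hm,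
        fun i => absurd ⟨i, trivial⟩ hm, rfl⟩
  | succ K ih =>
    intro g P hK hP hb habs
    by_cases hemp : ∃ j, ∀ i, g i ≠ some j
    · obtain ⟨j, hj⟩ := hemp
      rw [habs j b (fun i hi => absurd hi (hj i))]
      exact δ.refl z
    push Not at hemp
    choose s hs using hemp
    by_cases hinj : ∃ i j, g i = some j ∧ i ≠ s j
    · obtain ⟨i, j, hij, hne⟩ := hinj
      -- kill variable `i`
      have hup : ∀ k, IsPolynomial A (fun y : Fin N → A.carrier => Function.update y i z k) := by
        intro k
        by_cases hk : k = i
        · subst hk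
          simpa using IsPolynomial.const (A := A) (n := N) z
        · simpa [Function.update_of_ne hk] using IsPolynomial.proj (A := A) k
      have hP' : IsPolynomial A (fun y => P (Function.update y i z)) := hP.comp _ hup
      have h1 : δ.r z (P (Function.update b i z)) := by
        refine ih (Function.update g i none) (fun y => P (Function.update y i z)) ?_ hP' ?_ ?_
        · have : (Finset.univ.filter (fun k => Function.update g i none k ≠ none)) ⊂
              (Finset.univ.filter (fun k => g k ≠ none)) := by
            rw [Finset.ssubset_iff_of_subset]
            · exact ⟨i, by simp [hij], by simp⟩
            · intro k hk
              by_cases hki : k = i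
              · subst hki; simp at hk
              · simpa [Function.update_of_ne hki] using hk
          have := Finset.card_lt_card this
          omega
        · intro k l hk
          by_cases hki : k = i
          · subst hki; simp at hk
          · rw [Function.update_of_ne hki] at hk
            exact hb k l hk
        · intro l y hy
          refine habs l _ ?_
          intro k hk
          by_cases hki : k = i
          · subst hki; simp
          · rw [Function.update_of_ne hki]
            exact hy k (by rw [Function.update_of_ne hki]; exact hk)
      have h2 : δ.r z (q (P b) (P (Function.update b i z)) z) := by
        refine ih (fun k => if g k = some j ∧ k ≠ i then none else g k)
          (fun y => q (P y) (P (Function.update y i z)) z) ?_ (hq.comp hP hP' (.const z)) ?_ ?_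
        · have : (Finset.univ.filter
              (fun k => (if g k = some j ∧ k ≠ i then none else g k) ≠ none)) ⊂
              (Finset.univ.filter (fun k => g k ≠ none)) := by
            rw [Finset.ssubset_iff_of_subset]
            · exact ⟨s j, by simp [hs], by simp [hs, hne.symm]⟩
            · intro k hk
              simp only [Finset.mem_filter, Finset.mem_univ, true_and] at hk ⊢
              split_ifs at hk with hc
              · exact absurd rfl hk
              · exact hk
          have := Finset.card_lt_card this
          omega
        · intro k l hk
          split_ifs at hk
          exact hb k l hk
        · intro l y hy
          by_cases hl : l = j
          · subst hl
            have : Function.update y i z = y := by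
              rw [← hy i (by simp [hij])]
              simp
            show q (P y) (P (Function.update y i z)) z = z
            rw [this, hq2]
          · have e1 : ∀ k, g k = some l → y k = z := by
              intro k hk
              refine hy k ?_
              rw [if_neg, hk]
              rintro ⟨h, -⟩
              rw [hk] at h
              exact hl (Option.some.inj h)
            have e2 : P (Function.update y i z) = z := by
              refine habs l _ ?_
              intro k hk
              by_cases hki : k = i
              · subst hki; simp
              · rw [Function.update_of_ne hki]
                exact e1 k hk
            show q (P y) (P (Function.update y i z)) z = z
            rw [e2, habs l y e1, hq2]
      have h3 := hr.con δ h2 (δ.refl (P (Function.update b i z))) (δ.refl z)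
      rw [hrq] at h3
      have h4 : r z (P (Function.update b i z)) z = P (Function.update b i z) := by
        have := hrq (P (Function.update b i z)) (P (Function.update b i z)) z
        rwa [hq2] at this
      rw [h4] at h3
      exact δ.trans h1 h3
    · push Not at hinj
      have hsub : ∀ k, IsPolynomial A
          (fun x : Fin m → A.carrier => (g k).elim (b k) (fun j => x j)) := by
        intro k
        cases g k with
        | none => exact .const _
        | some j => exact .proj j
      have hmem := hδ _ ⟨fun x => P (fun k => (g k).elim (b k) (fun j => x j)),
        fun j => b (s j), hP.comp _ hsub, ?_, fun j => hb _ _ (hs j), rfl⟩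
      · have : (fun k => (g k).elim (b k) (fun j => b (s j))) = b := by
          funext k
          cases hk : g k with
          | none => rfl
          | some j => simp [hinj k j hk]
        simp only [this] at hmem
        exact hmem
      · rintro x ⟨j, hj⟩
        refine habs j _ ?_
        intro i hi
        simp [hi, hj]

/-- Set block `j` to `z`. -/
def killBlock {α : Type} {N m : ℕ} (z : α) (g : Fin N → Fin m) (j : Fin m) (y : Fin N → α) :
    Fin N → α := fun i => if g i = j then z else y i

/-- Difference operator in block `j`. -/
def diffOp {α : Type} {N m : ℕ} (q : α → α → α → α) (z : α) (g : Fin N → Fin m)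
    (P : (Fin N → α) → α) (j : Fin m) : (Fin N → α) → α :=
  fun y => q (P y) (P (killBlock z g j y)) z

theorem diffOp_poly {A : Algebra σ} {z : A.carrier} {q : A.carrier → A.carrier → A.carrier → A.carrier}
    (hq : Pol3 A q) {N m : ℕ} (g : Fin N → Fin m) {P : (Fin N → A.carrier) → A.carrier}
    (hP : IsPolynomial A P) (j : Fin m) : IsPolynomial A (diffOp q z g P j) := by
  refine hq.comp hP (hP.comp (fun i y => killBlock z g j y i) ?_) (.const z)
  intro i
  by_cases h : g i = j
  · simpa [killBlock, h] using IsPolynomial.const (A := A) (n := N) z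
  · simpa [killBlock, h] using IsPolynomial.proj (A := A) i

theorem diffOp_abs_self {α : Type} {z : α} {q : α → α → α → α} (hq2 : ∀ x y, q y y x = x)
    {N m : ℕ} (g : Fin N → Fin m) (P : (Fin N → α) → α) (j : Fin m) (y : Fin N → α)
    (hy : ∀ i, g i = j → y i = z) : diffOp q z g P j y = z := by
  have : killBlock z g j y = y := by
    funext i
    by_cases h : g i = j
    · simp [killBlock, h, hy i h]
    · simp [killBlock, h]
  rw [diffOp, this, hq2]

theorem diffOp_abs_other {α : Type} {z : α} {q : α → α → α → α} (hq2 : ∀ x y, q y y x = x)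
    {N m : ℕ} (g : Fin N → Fin m) (P : (Fin N → α) → α) (j k : Fin m)
    (hP : ∀ y, (∀ i, g i = k → y i = z) → P y = z) (y : Fin N → α)
    (hy : ∀ i, g i = k → y i = z) : diffOp q z g P j y = z := by
  have h : P (killBlock z g j y) = z := by
    refine hP _ ?_
    intro i hi
    by_cases h : g i = j
    · simp [killBlock, h]
    · simp only [killBlock, if_neg h]
      exact hy i hi
  rw [diffOp, h, hP y hy, hq2]

theorem foldl_abs {α : Type} {z : α} {q : α → α → α → α} (hq2 : ∀ x y, q y y x = x)
    {N m : ℕ} (g : Fin N → Fin m) (k : Fin m) (l : List (Fin m)) :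
    ∀ (P : (Fin N → α) → α), (k ∈ l ∨ ∀ y, (∀ i, g i = k → y i = z) → P y = z) →
      ∀ y, (∀ i, g i = k → y i = z) → l.foldl (diffOp q z g) P y = z := by
  induction l with
  | nil =>
    intro P h
    simpa using h
  | cons j l ih =>
    intro P h
    refine ih _ ?_
    rcases h with h | h
    · rcases List.mem_cons.mp h with h | h
      · subst h
        exact Or.inr (diffOp_abs_self hq2 g P k)
      · exact Or.inl h
    · exact Or.inr (diffOp_abs_other hq2 g P j k h)

theorem foldl_poly {A : Algebra σ} {z : A.carrier} {q : A.carrier → A.carrier → A.carrier → A.carrier}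
    (hq : Pol3 A q) {N m : ℕ} (g : Fin N → Fin m) (l : List (Fin m)) :
    ∀ P : (Fin N → A.carrier) → A.carrier, IsPolynomial A P →
      IsPolynomial A (l.foldl (diffOp q z g) P) := by
  induction l with
  | nil => exact fun P hP => hP
  | cons j l ih => exact fun P hP => ih _ (diffOp_poly hq g hP j)

/-- The cube vertex given by `ε`. -/
def vertex {α : Type} {N m : ℕ} (z : α) (g : Fin N → Fin m) (b : Fin N → α) (ε : Fin m → Bool) :
    Fin N → α := fun i => if ε (g i) then b i else z

theorem killBlock_vertex {α : Type} {N m : ℕ} (z : α) (g : Fin N → Fin m) (b : Fin N → α)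
    (ε : Fin m → Bool) (j : Fin m) :
    killBlock z g j (vertex z g b ε) = vertex z g b (Function.update ε j false) := by
  funext i
  by_cases h : g i = j
  · simp [killBlock, vertex, h]
  · simp [killBlock, vertex, h, Function.update_of_ne h]

theorem foldl_value {A : Algebra σ} {z : A.carrier} {δ : Con A}
    {q : A.carrier → A.carrier → A.carrier → A.carrier}
    (hq : Pol3 A q) (hq1 : ∀ x y, q x y y = x)
    {N m : ℕ} (g : Fin N → Fin (m + 1)) (b : Fin N → A.carrier) (l : List (Fin m)) :
    ∀ P : (Fin N → A.carrier) → A.carrier,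
      (∀ ε : Fin (m + 1) → Bool, ε (Fin.last m) = true → ε ≠ (fun _ => true) →
        δ.r (P (vertex z g b ε)) z) →
      δ.r ((l.map Fin.castSucc).foldl (diffOp q z g) P b) (P b) := by
  have hb : vertex z g b (fun _ => true) = b := by
    funext i
    simp [vertex]
  induction l with
  | nil => exact fun P _ => δ.refl _
  | cons j l ih =>
    intro P hP
    have hupd : ∀ ε : Fin (m + 1) → Bool, ε (Fin.last m) = true →
        δ.r (P (killBlock z g j.castSucc (vertex z g b ε))) z := by
      intro ε hε
      rw [killBlock_vertex]
      refine hP _ ?_ ?_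
      · rw [Function.update_of_ne (Fin.castSucc_lt_last j).ne', hε]
      · intro h
        have := congrFun h j.castSucc
        simp at this
    refine δ.trans (ih _ ?_) ?_
    · intro ε hε hne
      have := hq.con δ (hP ε hε hne) (hupd ε hε) (δ.refl z)
      rwa [hq1] at this
    · have := hq.con δ (δ.refl (P b)) (hupd (fun _ => true) rfl) (δ.refl z)
      rw [hq1, hb] at this
      exact this

theorem centralizes_of_absPairs {A : Algebra σ} {z : A.carrier} {m : ℕ}
    {θs : Fin (m + 1) → Con A} {δ : Con A}
    (hδ : ∀ p ∈ absPairs z θs, δ.r p.1 p.2)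
    {q r : A.carrier → A.carrier → A.carrier → A.carrier} (hq : Pol3 A q) (hr : Pol3 A r)
    (hq1 : ∀ x y, q x y y = x)
    (hq2 : ∀ x y, q y y x = x) (hrq : ∀ x a z, r (q x a z) a z = x) :
    Centralizes (fun j : Fin m => θs j.castSucc) (θs (Fin.last m)) δ := by
  intro N p hp g a b hab hcube
  have hab' : ∀ i, (θs (g i)).r (a i) (b i) := by
    intro i
    have := hab i
    revert this
    refine Fin.lastCases ?_ ?_ (g i)
    · simp
    · intro j
      simp
  have hrz : ∀ a, r z a z = a := by
    intro a
    have := hrq a a z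
    rwa [hq2] at this
  let b' : Fin N → A.carrier := fun i => q (b i) (a i) z
  let P : (Fin N → A.carrier) → A.carrier := fun y => p (fun i => r (y i) (a i) z)
  have hP : IsPolynomial A P :=
    hp.comp _ (fun i => hr.comp (.proj i) (.const (a i)) (.const z))
  have hPv : ∀ ε, P (vertex z g b' ε) = p (chooseVec g a b ε) := by
    intro ε
    show p _ = p _
    congr 1
    funext i
    by_cases h : ε (g i) = true
    · simp [vertex, chooseVec, h, b', hrq]
    · simp [vertex, chooseVec, h, hrz]
  have hb'1 : vertex z g b' (fun _ => true) = b' := by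
    funext i
    simp [vertex]
  have hb' : ∀ i, (θs (g i)).r z (b' i) := by
    intro i
    have := hq.con _ (hab' i) ((θs (g i)).refl (a i)) ((θs (g i)).refl z)
    rwa [hq2] at this
  let G := diffOp q z g P (Fin.last m)
  let E := ((List.finRange m).map Fin.castSucc).foldl (diffOp q z g) G
  have hE : IsPolynomial A E := foldl_poly hq g _ _ (diffOp_poly hq g hP _)
  have hEabs : ∀ j y, (∀ i, g i = j → y i = z) → E y = z := by
    intro j
    refine foldl_abs hq2 g j _ _ ?_
    refine Fin.lastCases ?_ ?_ j
    · exact Or.inr (diffOp_abs_self hq2 g P _)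
    · intro j
      left
      simp
  have h1 : δ.r z (E b') := by
    refine block_absorbing hδ hq hr hq2 hrq b' _ (fun i => some (g i)) E le_rfl hE ?_ ?_
    · intro i j hij
      cases hij
      exact hb' i
    · intro j y hy
      exact hEabs j y (fun i hi => hy i (by rw [hi]))
  have hG : ∀ ε, G (vertex z g b' ε) =
      q (p (chooseVec g a b ε)) (p (chooseVec g a b (Function.update ε (Fin.last m) false))) z := by
    intro ε
    show q _ _ _ = _
    rw [killBlock_vertex, hPv, hPv]
  have hlast : ∀ (ε : Fin (m + 1) → Bool) (v : Bool), Function.update ε (Fin.last m) v =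
      Fin.lastCases (motive := fun _ => Bool) v (fun j => ε j.castSucc) := by
    intro ε v
    funext i
    refine Fin.lastCases ?_ ?_ i
    · simp
    · intro j
      simp [Function.update_of_ne (Fin.castSucc_lt_last j).ne]
  have h2 : δ.r (E b') (G b') := by
    refine foldl_value hq hq1 g b' _ G ?_
    intro ε hε hne
    rw [hG]
    have e1 : ε = Function.update ε (Fin.last m) true := by
      rw [← hε, Function.update_eq_self]
    have := hcube (fun j => ε j.castSucc) (by
      intro h
      apply hne
      funext i
      refine Fin.lastCases hε ?_ i
      intro j
      exact congrFun h j)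
    rw [← hlast, ← hlast, ← e1] at this
    have h := hq.con δ (δ.symm this) (δ.refl (p (chooseVec g a b (Function.update ε (Fin.last m) false)))) (δ.refl z)
    rwa [hq2] at h
  have h3 := δ.trans h1 h2
  rw [← hb'1, hG, hlast] at h3
  have e2 : (fun _ => true : Fin (m + 1) → Bool) =
      Fin.lastCases (motive := fun _ => Bool) true (fun _ => true) := by
    rw [← hlast (fun _ => true) true]
    exact (Function.update_eq_self (Fin.last m) (fun _ => true)).symm
  rw [← e2]
  have h4 := hr.con δ h3 (δ.refl (p (chooseVec g a b (Fin.lastCases (motive := fun _ => Bool) false (fun _ => true))))) (δ.refl z)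
  rw [hrq, hrz] at h4
  exact h4

theorem absPairs_of_centralizes {A : Algebra σ} {z : A.carrier} {m : ℕ}
    {θs : Fin (m + 1) → Con A} {δ : Con A}
    (h : Centralizes (fun j : Fin m => θs j.castSucc) (θs (Fin.last m)) δ)
    (hm : 0 < m) : ∀ p ∈ absPairs z θs, δ.r p.1 p.2 := by
  rintro _ ⟨f, b, hf, habs, hb, rfl⟩
  have := h (m + 1) f hf id (fun _ => z) b (by
    intro i
    refine Fin.lastCases ?_ ?_ i
    · simpa using hb _
    · intro j
      simpa using hb _) (by
    intro ε hε
    obtain ⟨j, hj⟩ : ∃ j, ε j = false := by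
      by_contra hcon
      push Not at hcon
      apply hε
      funext j
      simpa using hcon j
    rw [habs _ ⟨j.castSucc, by simp [chooseVec, hj]⟩, habs _ ⟨j.castSucc, by simp [chooseVec, hj]⟩]
    exact δ.refl z)
  rw [habs _ ⟨Fin.last m, by simp [chooseVec]⟩] at this
  have e : chooseVec id (fun _ => z) b
      (Fin.lastCases (motive := fun _ => Bool) true (fun _ : Fin m => true)) = b := by
    funext i
    refine Fin.lastCases ?_ ?_ i
    · simp [chooseVec]
    · intro j
      simp [chooseVec]
  rw [e] at this
  exact this

/-- Lemma 3.11 of "On Supernilpotent Algebras": in a nilpotent algebra of a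
variety with a weak difference term, the higher commutator `[θ₁,…,θₙ]` is
generated by the pairs `(0, f(b₁,…,bₙ))` with `f` an `n`-ary `0`-absorbing
polynomial and `(0, bᵢ) ∈ θᵢ`. -/
theorem nilpotent_commutator_generators {σ : Signature} (V : Algebra σ → Prop)
    (hV : IsVariety V) (c : Term σ (Fin 3)) (hc : IsWeakDiffTerm V c)
    (A : Algebra σ) (hA : V A) (hnil : Nilpotent A) (z : A.carrier)
    {m : ℕ} (θs : Fin (m + 1) → Con A) :
    commList θs = Con.conGen {pr : A.carrier × A.carrier |
      ∃ (f : (Fin (m + 1) → A.carrier) → A.carrier) (b : Fin (m + 1) → A.carrier),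
        IsPolynomial A f ∧ Absorbs A f (fun _ => z) z ∧
        (∀ i, (θs i).r z (b i)) ∧ pr = (z, f b)} := by
  obtain ⟨q, r, hq, hr, hq1, hq2, hrq⟩ := exists_malcev V c hc A hA hnil
  change commList θs = Con.conGen (absPairs z θs)
  cases m with
  | zero =>
    apply Con.ext'
    · intro a b hab δ hδ
      have hab : (θs 0).r a b := hab
      have h1 := hδ (z, q b a z) ⟨fun x => x 0, fun _ => q b a z, .proj 0,
        (fun y ⟨i, hi⟩ => by
          rw [Fin.fin_one_eq_zero i] at hi
          exact hi), (fun i => by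
          rw [Fin.fin_one_eq_zero i]
          have := hq.con _ hab ((θs 0).refl a) ((θs 0).refl z)
          rwa [hq2] at this), rfl⟩
      have h2 := hr.con δ h1 (δ.refl a) (δ.refl z)
      have h3 := hrq a a z
      rw [hq2] at h3
      simp only [hrq, h3] at h2
      exact h2
    · intro a b hab
      refine hab (θs 0) ?_
      rintro _ ⟨f, y, hf, habs, hy, rfl⟩
      have h := hf.con (θs 0) (x := fun _ => z) (y := y) (fun i => by
        have := hy i
        rwa [Fin.fin_one_eq_zero i] at this ⊢)
      rw [habs _ ⟨0, rfl⟩] at h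
      exact h
  | succ m =>
    apply Con.ext'
    · intro a b hab δ hδ
      exact hab δ (centralizes_of_absPairs hδ hq hr hq1 hq2 hrq)
    · intro a b hab δ hδ
      exact hab δ (absPairs_of_centralizes hδ (Nat.succ_pos m))

end UA
end

section
/- Let V be a variety and n ≥ 2. The following are equivalent: (1) [θ(x,y),…,θ(x,y)]_n < θ(x,y) in the congruence lattice of the free V-algebra F_V(2) on two generators x,y, where θ(x,y) denotes the congruence generated by the pair (x,y); (2) V contains an algebra with a proper n-supernilpotent interval in its congruence lattice, i.e., some A ∈ V has congruences α < β with [β,…,β]_n ≤ α. -/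
set_option autoImplicit false

namespace UA

variable {σ : Signature}

theorem nfold_le_of {A B : Algebra σ} (θ : Con A) (β : Con B) (h : A.carrier → B.carrier)
    (hh : IsHom A B h) (hθ : ∀ a b, θ.r a b → β.r (h a) (h b)) (m : ℕ) (a b : A.carrier)
    (hab : (nfold θ (m + 2)).r a b) : (nfold β (m + 2)).r (h a) (h b) := by
  have hpoly : ∀ {N : ℕ} (p : (Fin N → A.carrier) → A.carrier), IsPolynomial A p →
      ∃ q : (Fin N → B.carrier) → B.carrier, IsPolynomial B q ∧
        ∀ x, h (p x) = q (fun i => h (x i)) := by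
    intro N p hp
    induction hp with
    | proj i => exact ⟨_, IsPolynomial.proj i, fun _ => rfl⟩
    | const a => exact ⟨_, IsPolynomial.const (h a), fun _ => rfl⟩
    | app o g _ ih =>
      choose q hq hq' using ih
      refine ⟨_, IsPolynomial.app o q hq, fun x => ?_⟩
      rw [hh]
      exact congrArg _ (funext fun j => hq' j x)
  intro δ hδ
  let δ' : Con A :=
    { r := fun a b => δ.r (h a) (h b)
      refl := fun _ => δ.refl _
      symm := fun h => δ.symm h
      trans := fun h h' => δ.trans h h'
      compat := fun o x y hxy => by
        rw [hh, hh]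
        exact δ.compat o _ _ hxy }
  refine hab δ' ?_
  intro N p hp g u v huv hε
  obtain ⟨q, hq, hpq⟩ := hpoly p hp
  have hc : ∀ ε : Fin (m + 1 + 1) → Bool,
      h (p (chooseVec g u v ε)) = q (chooseVec g (fun i => h (u i)) (fun i => h (v i)) ε) := by
    intro ε
    rw [hpq]
    refine congrArg q (funext fun i => ?_)
    unfold chooseVec
    split <;> rfl
  have hcase : ∀ (C : Algebra σ) (γ : Con C) (j : Fin (m + 1 + 1)),
      (Fin.lastCases (motive := fun _ => Con C) γ (fun _ => γ) j) = γ := by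
    intro C γ j
    refine Fin.lastCases ?_ (fun j => ?_) j <;> simp
  show δ.r (h _) (h _)
  rw [hc, hc]
  refine hδ N q hq g _ _ (fun i => ?_) (fun ε hne => ?_)
  · have h1 := huv i
    rw [hcase] at h1 ⊢
    exact hθ _ _ h1
  · have h1 : δ.r (h _) (h _) := hε ε hne
    rwa [hc, hc] at h1

theorem poly_compat {A : Algebra σ} (θ : Con A) {N : ℕ} (p : (Fin N → A.carrier) → A.carrier)
    (hp : IsPolynomial A p) (x y : Fin N → A.carrier) (h : ∀ i, θ.r (x i) (y i)) :
    θ.r (p x) (p y) := by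
  induction hp with
  | proj i => exact h i
  | const a => exact θ.refl a
  | app o g _ ih => exact θ.compat o _ _ fun j => ih j

theorem nfold_le_self {A : Algebra σ} (θ : Con A) (m : ℕ) : nfold θ (m + 2) ≤ θ := by
  intro a b hab
  refine hab θ ?_
  intro N p hp g u v huv _
  have hcase : ∀ (j : Fin (m + 1 + 1)),
      (Fin.lastCases (motive := fun _ => Con A) θ (fun _ => θ) j) = θ := by
    intro j
    refine Fin.lastCases ?_ (fun j => ?_) j <;> simp
  refine poly_compat θ p hp _ _ fun i => ?_
  have h1 := huv i
  rw [hcase] at h1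
  unfold chooseVec
  split <;> split
  · exact θ.refl _
  · exact θ.symm h1
  · exact h1
  · exact θ.refl _

theorem eval_subst {X Y : Type} (A : Algebra σ) (v : Y → A.carrier) (s : X → Term σ Y)
    (t : Term σ X) : (t.subst s).eval A v = t.eval A (fun x => (s x).eval A v) := by
  induction t with
  | var x => rfl
  | app o t ih => exact congrArg (A.interp o) (funext ih)

theorem eval_free {X Y : Type} (V : Algebra σ → Prop) (v : X → (freeAlg V Y).carrier)
    (t : Term σ X) : t.eval (freeAlg V Y) v =
      Quotient.mk (vSetoid V Y) (t.subst fun x => (v x).out) := by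
  induction t with
  | var x => exact (Quotient.out_eq (v x)).symm
  | app o t ih =>
    refine Quotient.sound ?_
    intro A hA w
    refine congrArg (A.interp o) (funext fun i => ?_)
    have h1 : (vSetoid V Y).r (Quotient.out (Term.eval (freeAlg V Y) v (t i)))
        ((t i).subst fun x => (v x).out) := by
      apply Quotient.exact
      exact (Quotient.out_eq _).trans (ih i)
    exact h1 A hA w

theorem freeAlg_mem (V : Algebra σ → Prop) (hV : IsVariety V) (X : Type) : V (freeAlg V X) := by
  obtain ⟨E, hE⟩ := hV
  rw [hE]
  intro e he v
  rw [eval_free, eval_free]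
  refine Quotient.sound ?_
  intro A hA w
  rw [eval_subst, eval_subst]
  exact (hE A).1 hA e he _

/-- The homomorphism from the free algebra extending an assignment. -/
def freeLift (V : Algebra σ → Prop) {X : Type} (A : Algebra σ) (hA : V A) (v : X → A.carrier) :
    (freeAlg V X).carrier → A.carrier :=
  Quotient.lift (fun t : Term σ X => t.eval A v) (fun _ _ h => h A hA v)

theorem freeLift_hom (V : Algebra σ → Prop) {X : Type} (A : Algebra σ) (hA : V A)
    (v : X → A.carrier) : IsHom (freeAlg V X) A (freeLift V A hA v) := by
  intro o x
  refine congrArg (A.interp o) (funext fun i => ?_)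
  conv_rhs => rw [← Quotient.out_eq (x i)]
  rfl

/-- Lemma 4.1 of "On Supernilpotent Algebras": for a variety `V` and `n ≥ 2`,
`[θ(x,y),…,θ(x,y)]_n < θ(x,y)` in `Con F_V(2)` iff `V` contains an algebra with a
proper `n`-supernilpotent interval in its congruence lattice. -/
theorem free_algebra_supernilpotent_interval {σ : Signature} (V : Algebra σ → Prop)
    (hV : IsVariety V) (n : ℕ) (hn : 2 ≤ n) :
    (nfold (conPair (freeAlg V (Fin 2))
        (Quotient.mk (vSetoid V (Fin 2)) (Term.var (0 : Fin 2)))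
        (Quotient.mk (vSetoid V (Fin 2)) (Term.var (1 : Fin 2)))) n <
      conPair (freeAlg V (Fin 2))
        (Quotient.mk (vSetoid V (Fin 2)) (Term.var (0 : Fin 2)))
        (Quotient.mk (vSetoid V (Fin 2)) (Term.var (1 : Fin 2)))) ↔
    (∃ A : Algebra σ, V A ∧ ∃ α β : Con A, α < β ∧ nfold β n ≤ α) := by
  obtain ⟨m, rfl⟩ : ∃ m, n = m + 2 := ⟨n - 2, by omega⟩
  constructor
  · intro h
    exact ⟨_, freeAlg_mem V hV (Fin 2), _, _, h, fun _ _ h => h⟩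
  · rintro ⟨A, hA, α, β, ⟨_, hnot⟩, hle⟩
    refine ⟨nfold_le_self _ m, fun hcon => hnot fun a b hab => ?_⟩
    have hh := freeLift_hom V A hA ![a, b]
    let δ : Con (freeAlg V (Fin 2)) :=
      { r := fun s t => β.r (freeLift V A hA ![a, b] s) (freeLift V A hA ![a, b] t)
        refl := fun _ => β.refl _
        symm := fun h => β.symm h
        trans := fun h h' => β.trans h h'
        compat := fun o x y hxy => by
          rw [hh, hh]
          exact β.compat o _ _ hxy }
    refine hle _ _ (nfold_le_of (conPair (freeAlg V (Fin 2))
        (Quotient.mk (vSetoid V (Fin 2)) (Term.var (0 : Fin 2)))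
        (Quotient.mk (vSetoid V (Fin 2)) (Term.var (1 : Fin 2)))) β (freeLift V A hA ![a, b]) hh (fun s t hst => hst δ ?_) m
        (Quotient.mk (vSetoid V (Fin 2)) (Term.var (0 : Fin 2)))
        (Quotient.mk (vSetoid V (Fin 2)) (Term.var (1 : Fin 2)))
      (hcon _ _ ?_))
    · intro p hp
      rw [Set.mem_singleton_iff.1 hp]
      exact hab
    · intro c hc
      exact hc _ rfl

end UA
end
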